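/- Let w̃ᵢ = Γ_pr⁻¹ ŵᵢ. Then the matrix Γ_pr − Σ_{i=1}^{r} (δᵢ²/(1+δᵢ²)) ŵᵢ ŵᵢᵀ is invertible and its inverse equals Γ_pr⁻¹ + Σ_{i=1}^{r} δᵢ² w̃ᵢ w̃ᵢᵀ. -/

import Mathlib

open Matrix Finset

/-! With `Eᵢ = ŵᵢ w̃ᵢᵀ`, the two matrices factor as `(1 - ∑ δᵢ²/(1+δᵢ²) Eᵢ) Γpr` and
`Γpr⁻¹ (1 + ∑ δᵢ² Eᵢ)`. Normalization makes the `Eᵢ` orthogonal idempotents, so the product is `1`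
because `(1 - t/(1+t)) (1 + t) = 1` for every `t ≠ -1`. -/

section OrthogonalIdempotents

variable {ι R A : Type*}

lemma sum_smul_mul_sum_smul_of_orthogonalIdempotents [CommSemiring R] [Semiring A] [Algebra R A]
    {e : ι → A} (he : OrthogonalIdempotents e) (s : Finset ι) (a b : ι → R) :
    (∑ i ∈ s, a i • e i) * ∑ i ∈ s, b i • e i = ∑ i ∈ s, (a i * b i) • e i := by
  classical
  rw [sum_mul_sum]
  refine sum_congr rfl fun i hi ↦ ?_
  simp [he.mul_eq, smul_smul, mul_comm (b i), hi]

lemma one_sub_sum_smul_mul_one_add_sum_smul [CommRing R] [Ring A] [Algebra R A]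
    {e : ι → A} (he : OrthogonalIdempotents e) (s : Finset ι) {a b : ι → R}
    (hab : ∀ i ∈ s, (1 - a i) * (1 + b i) = 1) :
    (1 - ∑ i ∈ s, a i • e i) * (1 + ∑ i ∈ s, b i • e i) = 1 := by
  have hb : ∑ i ∈ s, b i • e i = ∑ i ∈ s, a i • e i + ∑ i ∈ s, (a i * b i) • e i := by
    rw [← sum_add_distrib]
    refine sum_congr rfl fun i hi ↦ ?_
    rw [← add_smul]
    congr 1
    linear_combination hab i hi
  rw [sub_mul, one_mul, mul_add, mul_one, sum_smul_mul_sum_smul_of_orthogonalIdempotents he, ← hb,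
    add_sub_cancel_right]

end OrthogonalIdempotents

lemma orthogonalIdempotents_vecMulVec {ι n R : Type*} [DecidableEq ι] [Fintype n]
    [DecidableEq n] [Semiring R] {u v : ι → n → R}
    (huv : ∀ i j, v i ⬝ᵥ u j = if i = j then 1 else 0) :
    OrthogonalIdempotents fun i ↦ vecMulVec (u i) (v i) where
  idem i := by
    simp [IsIdempotentElem, vecMulVec_mul_vecMulVec, huv]
  ortho i j hij := by
    simp [vecMulVec_mul_vecMulVec, huv, hij]

theorem optimal_covariance_inverse_is_optimal_precision_general {ι n K : Type*} [DecidableEq ι]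
    [Fintype n] [DecidableEq n] [Field K] {A : Matrix n n K} (hA : IsUnit A) {u v : ι → n → K}
    (huv : ∀ i j, v i ⬝ᵥ (A⁻¹ *ᵥ u j) = if i = j then 1 else 0) (s : Finset ι) {c : ι → K}
    (hc : ∀ i ∈ s, 1 + c i ≠ 0) :
    IsUnit (A - ∑ i ∈ s, (c i / (1 + c i)) • vecMulVec (u i) (v i)) ∧
      (A - ∑ i ∈ s, (c i / (1 + c i)) • vecMulVec (u i) (v i))⁻¹ =
        A⁻¹ + ∑ i ∈ s, c i • vecMulVec (A⁻¹ *ᵥ u i) (v i ᵥ* A⁻¹) := by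
  have hdet : IsUnit A.det := (isUnit_iff_isUnit_det A).mp hA
  let E (i : ι) : Matrix n n K := vecMulVec (u i) (v i ᵥ* A⁻¹)
  have hE : OrthogonalIdempotents E :=
    orthogonalIdempotents_vecMulVec fun i j ↦ by rw [← dotProduct_mulVec, huv]
  have hleft : A - ∑ i ∈ s, (c i / (1 + c i)) • vecMulVec (u i) (v i) =
      (1 - ∑ i ∈ s, (c i / (1 + c i)) • E i) * A := by
    simp [E, sub_mul, sum_mul, vecMulVec_mul, nonsing_inv_mul _ hdet]
  have hright : A⁻¹ + ∑ i ∈ s, c i • vecMulVec (A⁻¹ *ᵥ u i) (v i ᵥ* A⁻¹) =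
      A⁻¹ * (1 + ∑ i ∈ s, c i • E i) := by
    simp [E, mul_add, mul_sum, mul_vecMulVec]
  have hmul : (A - ∑ i ∈ s, (c i / (1 + c i)) • vecMulVec (u i) (v i)) *
      (A⁻¹ + ∑ i ∈ s, c i • vecMulVec (A⁻¹ *ᵥ u i) (v i ᵥ* A⁻¹)) = 1 := by
    rw [hleft, hright, mul_assoc, mul_nonsing_inv_cancel_left _ _ hdet]
    refine one_sub_sum_smul_mul_one_add_sum_smul hE s fun i hi ↦ ?_
    have hci : 1 + c i ≠ 0 := hc i hi
    field_simp
    ring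
  exact ⟨.of_mul_eq_one _ hmul, inv_eq_right_inv hmul⟩

/-- Corollary 3.1 (ii): the optimal posterior covariance approximation
`Γpr − Σ_{i≤r} (δᵢ²/(1+δᵢ²)) ŵᵢ ŵᵢᵀ` is invertible, with inverse the optimal posterior
precision approximation `Γpr⁻¹ + Σ_{i≤r} δᵢ² w̃ᵢ w̃ᵢᵀ`, where `w̃ᵢ = Γpr⁻¹ ŵᵢ`. -/
theorem optimal_covariance_inverse_is_optimal_precision
    (n m r : ℕ) (hn : 0 < n) (hm : 0 < m) (hr : r ≤ n)
    (G : Matrix (Fin m) (Fin n) ℝ)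
    (Γobs : Matrix (Fin m) (Fin m) ℝ) (hobs : Γobs.PosDef)
    (Γpr : Matrix (Fin n) (Fin n) ℝ) (hpr : Γpr.PosDef)
    (H : Matrix (Fin n) (Fin n) ℝ)
    (hH : H = Gᵀ * Γobs⁻¹ * G)
    (δ : Fin n → ℝ) (w : Fin n → Fin n → ℝ)
    (hδ : ∀ i, 0 ≤ δ i)
    (hord : ∀ i j : Fin n, i ≤ j → (δ j) ^ 2 ≤ (δ i) ^ 2)
    (heig : ∀ i, H *ᵥ w i = (δ i) ^ 2 • (Γpr⁻¹ *ᵥ w i))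
    (hnorm : ∀ i j, w i ⬝ᵥ (Γpr⁻¹ *ᵥ w j) = if i = j then (1:ℝ) else 0)
    (wt : Fin n → Fin n → ℝ) (hwt : ∀ i, wt i = Γpr⁻¹ *ᵥ w i)
    (Γhat : Matrix (Fin n) (Fin n) ℝ)
    (hΓhat : Γhat = Γpr - ∑ i ∈ Finset.univ.filter (fun i : Fin n => (i : ℕ) < r),
      ((δ i) ^ 2 / (1 + (δ i) ^ 2)) • vecMulVec (w i) (w i)) :
    IsUnit Γhat ∧
      Γhat⁻¹ = Γpr⁻¹ + ∑ i ∈ Finset.univ.filter (fun i : Fin n => (i : ℕ) < r),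
        (δ i) ^ 2 • vecMulVec (wt i) (wt i) := by
  have hvecMul (i) : w i ᵥ* Γpr⁻¹ = wt i := by
    rw [hwt, ← mulVec_transpose, ← conjTranspose_eq_transpose_of_trivial, hpr.inv.isHermitian.eq]
  simpa only [hΓhat, hvecMul, ← hwt] using
    optimal_covariance_inverse_is_optimal_precision_general hpr.isUnit hnorm
      (univ.filter fun i : Fin n => (i : ℕ) < r) (c := fun i ↦ δ i ^ 2) fun i _ ↦ by positivity
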